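/- Let f(z) = ∑_{n=1}^∞ z^n / log(n+1) for z in the unit disc 𝔻. Then for every p > 1 the function f belongs to the weighted Bergman space A^p_{p−2}, while ∫_0^1 f(t) dt = +∞ (equivalently, ∑_{n=1}^∞ 1/((n+1) log(n+1)) = ∞). Consequently, for every p > 1 the Hilbert operator ℋ and the operator ℐ given by ℐ g(z) = ∫_0^1 g(t)/(1−tz) dt are not well defined on A^p_{p−2}. -/

import Mathlib

open MeasureTheory Set Metric Filter Asymptotics
open scoped ENNReal

/-- Normalized area measure on `ℂ`: Lebesgue area divided by `π`,
so that the unit disc has total mass `1`. -/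
noncomputable def dA : Measure ℂ := (ENNReal.ofReal Real.pi)⁻¹ • volume

/-- The (weighted) Bergman norm `‖f‖_{A^p_α} = ((α+1) ∫_𝔻 (1-|z|²)^α |f(z)|^p dA)^{1/p}`,
as an extended real number. -/
noncomputable def bergmanNorm (p α : ℝ) (f : ℂ → ℂ) : ℝ≥0∞ :=
  (ENNReal.ofReal (α + 1) *
    ∫⁻ z in ball (0 : ℂ) 1, ENNReal.ofReal ((1 - ‖z‖ ^ 2) ^ α * ‖f z‖ ^ p) ∂dA) ^ (1 / p)

/-- The Dirichlet-type norm `‖f‖_{𝒟^p_α} = |f(0)| + ‖f′‖_{A^p_α}`. -/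
noncomputable def dirichletNorm (p α : ℝ) (f : ℂ → ℂ) : ℝ≥0∞ :=
  ENNReal.ofReal ‖f 0‖ + bergmanNorm p α (deriv f)

/-- The Hardy `H^1` norm `sup_{0 ≤ r < 1} (2π)⁻¹ ∫_0^{2π} |f(re^{iθ})| dθ`. -/
noncomputable def hardyNorm (f : ℂ → ℂ) : ℝ≥0∞ :=
  ⨆ r ∈ Ico (0 : ℝ) 1,
    (ENNReal.ofReal (2 * Real.pi))⁻¹ *
      ∫⁻ θ in Ioc (0 : ℝ) (2 * Real.pi),
        ENNReal.ofReal ‖f ((r : ℂ) * Complex.exp ((θ : ℂ) * Complex.I))‖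

/-- The operator `I_μ f(z) = ∫_{[0,1)} f(t)/(1-tz) dμ(t)`. -/
noncomputable def Imu (μ : Measure ℝ) (f : ℂ → ℂ) (z : ℂ) : ℂ :=
  ∫ t : ℝ, f (t : ℂ) / (1 - (t : ℂ) * z) ∂μ

/-- The moment of order `n` of `μ`. -/
noncomputable def moment (μ : Measure ℝ) (n : ℕ) : ℝ := ∫ t : ℝ, t ^ n ∂μ

/-- `M_∞(r, f) = sup_{|z| = r} |f(z)|`. -/
noncomputable def Minf (f : ℂ → ℂ) (r : ℝ) : ℝ := ⨆ z ∈ sphere (0 : ℂ) r, ‖f z‖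

/-- The function `f(z) = ∑_{n≥1} z^n / log(n+1)` of Dostanić, Jevtić and Vukotić. -/
noncomputable def fDJV : ℂ → ℂ := fun z => ∑' n : ℕ, z ^ (n + 1) / (Real.log ((n : ℝ) + 2) : ℂ)

/-!
The coefficients `a n = 1 / log (n + 2)` decrease, so summation by parts bounds the tail of
`∑ a n * z ^ n` from `N` on by `2 * a N / ‖1 - z‖`. Choosing `N` well, `‖f z‖` is at most of
order `4 ^ k / (k + 1)` once `‖1 - z‖ ≥ 4 ^ (-k)`. The points of the disc with `‖1 - z‖ ≤ x`
have mass `O(x ^ (α + 2))` for `(1 - ‖z‖²) ^ α dA`, which for `α = p - 2` is `O(4 ^ (-k * p))`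
on the `k`-th of the shells of `4`-adic width around `1`. Hence `∫ ‖f‖ ^ p` is dominated by
`∑ (k + 1) ^ (-p)`, finite exactly when `p > 1`. On `(0, 1)` all terms are nonnegative, so
integrating termwise gives `∑ a n / (n + 2)`, which diverges by Cauchy condensation.
-/

section AntitoneCoefficients

variable {a : ℕ → ℝ} {z : ℂ}

lemma summable_mul_pow_of_norm_le {c : ℕ → ℂ} {C : ℝ} (hc : ∀ n, ‖c n‖ ≤ C) (hz : ‖z‖ < 1) :
    Summable fun n ↦ c n * z ^ n := by
  refine .of_norm_bounded
    ((summable_geometric_of_lt_one (norm_nonneg z) hz).mul_left C) fun n ↦ ?_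
  rw [norm_mul, norm_pow]
  gcongr
  exact hc n

lemma differentiableOn_tsum_mul_pow {c : ℕ → ℂ} {C : ℝ} (hc : ∀ n, ‖c n‖ ≤ C) :
    DifferentiableOn ℂ (fun z ↦ ∑' n, c n * z ^ n) (ball 0 1) := by
  intro z hz
  obtain ⟨r, hzr, hr1⟩ := exists_between (mem_ball_zero_iff.1 hz)
  have hr0 : 0 ≤ r := (norm_nonneg z).trans hzr.le
  have hdiff : DifferentiableOn ℂ (fun z ↦ ∑' n, c n * z ^ n) (ball 0 r) := by
    refine Complex.differentiableOn_tsum_of_summable_norm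
      ((summable_geometric_of_lt_one hr0 hr1).mul_left C) (fun n ↦ by fun_prop) isOpen_ball
      fun n w hw ↦ ?_
    rw [norm_mul, norm_pow]
    gcongr
    · exact (norm_nonneg _).trans (hc n)
    · exact hc n
    · exact (mem_ball_zero_iff.1 hw).le
  exact (hdiff.differentiableAt (isOpen_ball.mem_nhds (mem_ball_zero_iff.2 hzr)))
    |>.differentiableWithinAt

lemma norm_ofReal_le_of_antitone (ha : Antitone a) (ha0 : ∀ n, 0 ≤ a n) (n : ℕ) :
    ‖(a n : ℂ)‖ ≤ a 0 := by
  rw [Complex.norm_real, Real.norm_of_nonneg (ha0 n)]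
  exact ha n.zero_le

lemma norm_tsum_sub_mul_pow_le (ha : Antitone a) (ha0 : ∀ n, 0 ≤ a n) (hz : ‖z‖ ≤ 1) :
    ‖∑' n, ((a (n + 1) : ℂ) - a n) * z ^ (n + 1)‖ ≤ a 0 := by
  have hterm (n : ℕ) : ‖((a (n + 1) : ℂ) - a n) * z ^ (n + 1)‖ ≤ a n - a (n + 1) := by
    rw [norm_mul, norm_pow, ← Complex.ofReal_sub, Complex.norm_real,
      Real.norm_of_nonpos (sub_nonpos.2 (ha n.le_succ)), neg_sub]
    exact mul_le_of_le_one_right (sub_nonneg.2 (ha n.le_succ))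
      (pow_le_one₀ (norm_nonneg z) hz)
  have hpartial (N : ℕ) :
      ∑ n ∈ Finset.range N, ‖((a (n + 1) : ℂ) - a n) * z ^ (n + 1)‖ ≤ a 0 :=
    calc ∑ n ∈ Finset.range N, ‖((a (n + 1) : ℂ) - a n) * z ^ (n + 1)‖
        ≤ ∑ n ∈ Finset.range N, (a n - a (n + 1)) := Finset.sum_le_sum fun n _ ↦ hterm n
      _ = a 0 - a N := Finset.sum_range_sub' a N
      _ ≤ a 0 := sub_le_self _ (ha0 N)
  exact (norm_tsum_le_tsum_norm (summable_of_sum_range_le (fun _ ↦ norm_nonneg _) hpartial)).trans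
    (Real.tsum_le_of_sum_range_le (fun _ ↦ norm_nonneg _) hpartial)

lemma norm_one_sub_mul_tsum_le (ha : Antitone a) (ha0 : ∀ n, 0 ≤ a n) (hz : ‖z‖ < 1) :
    ‖(1 - z) * ∑' n, (a n : ℂ) * z ^ n‖ ≤ 2 * a 0 := by
  have hsum := summable_mul_pow_of_norm_le (norm_ofReal_le_of_antitone ha ha0) hz
  have hshift : ∑' n, (a n : ℂ) * z ^ n = a 0 + ∑' n, (a (n + 1) : ℂ) * z ^ (n + 1) := by
    simpa using hsum.tsum_eq_zero_add
  have hmul (n : ℕ) : z * ((a n : ℂ) * z ^ n) = a n * z ^ (n + 1) := by ring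
  have hsummation_by_parts : (1 - z) * ∑' n, (a n : ℂ) * z ^ n =
      a 0 + ∑' n, ((a (n + 1) : ℂ) - a n) * z ^ (n + 1) := by
    simp only [sub_mul, one_mul]
    rw [((summable_nat_add_iff 1).2 hsum).tsum_sub ((hsum.mul_left z).congr hmul), ← add_sub_assoc,
      ← hshift, ← tsum_mul_left]
    simp only [hmul]
  calc ‖(1 - z) * ∑' n, (a n : ℂ) * z ^ n‖
      ≤ ‖(a 0 : ℂ)‖ + ‖∑' n, ((a (n + 1) : ℂ) - a n) * z ^ (n + 1)‖ :=
        hsummation_by_parts ▸ norm_add_le _ _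
    _ ≤ a 0 + a 0 := add_le_add (norm_ofReal_le_of_antitone ha ha0 0)
        (norm_tsum_sub_mul_pow_le ha ha0 hz.le)
    _ = 2 * a 0 := (two_mul _).symm

lemma norm_tsum_mul_pow_le (ha : Antitone a) (ha0 : ∀ n, 0 ≤ a n) (hz : ‖z‖ < 1) (N : ℕ) :
    ‖∑' n, (a n : ℂ) * z ^ n‖ ≤ ∑ n ∈ Finset.range N, a n + 2 * a N / ‖1 - z‖ := by
  have hpow (n : ℕ) : ‖z‖ ^ n ≤ 1 := pow_le_one₀ (norm_nonneg z) hz.le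
  have hsub : 0 < ‖1 - z‖ := norm_pos_iff.2 (sub_ne_zero.2 (by rintro rfl; simp at hz))
  have hsum := summable_mul_pow_of_norm_le (norm_ofReal_le_of_antitone ha ha0) hz
  have htail : ∑' n, (a (n + N) : ℂ) * z ^ (n + N) = z ^ N * ∑' n, (a (n + N) : ℂ) * z ^ n := by
    rw [← tsum_mul_left]
    exact tsum_congr fun n ↦ by ring
  rw [← hsum.sum_add_tsum_nat_add N, htail]
  refine (norm_add_le _ _).trans (add_le_add ((norm_sum_le _ _).trans ?_) ?_)
  · refine Finset.sum_le_sum fun n _ ↦ ?_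
    rw [norm_mul, norm_pow, Complex.norm_real, Real.norm_of_nonneg (ha0 n)]
    exact mul_le_of_le_one_right (ha0 n) (hpow n)
  · rw [norm_mul, norm_pow, le_div_iff₀' hsub]
    calc ‖1 - z‖ * (‖z‖ ^ N * ‖∑' n, (a (n + N) : ℂ) * z ^ n‖)
        ≤ ‖1 - z‖ * ‖∑' n, (a (n + N) : ℂ) * z ^ n‖ := by
          gcongr
          exact mul_le_of_le_one_left (norm_nonneg _) (hpow N)
      _ ≤ 2 * a N := by
          simpa using norm_one_sub_mul_tsum_le (a := fun n ↦ a (n + N))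
            (fun _ _ h ↦ ha (Nat.add_le_add_right h N)) (fun n ↦ ha0 (n + N)) hz

end AntitoneCoefficients

section CarlesonBoxes

variable {α : ℝ}

lemma setLIntegral_Ioc_rpow {x : ℝ} (hα : -1 < α) (hx : 0 ≤ x) :
    ∫⁻ s in Ioc 0 x, ENNReal.ofReal (s ^ α) = ENNReal.ofReal (x ^ (α + 1) / (α + 1)) := by
  rw [← ofReal_integral_eq_lintegral_ofReal, ← intervalIntegral.integral_of_le hx,
    integral_rpow (.inl hα), Real.zero_rpow (by linarith), sub_zero]
  · exact (intervalIntegrable_iff_integrableOn_Ioc_of_le hx).1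
      (intervalIntegral.intervalIntegrable_rpow' hα)
  · filter_upwards [ae_restrict_mem measurableSet_Ioc] with s hs
    exact Real.rpow_nonneg hs.1.le α

lemma setLIntegral_Icc_one_sub_rpow {x : ℝ} (hα : -1 < α) (hx : 0 ≤ x) :
    ∫⁻ r in Icc (1 - x) 1, ENNReal.ofReal ((1 - r) ^ α) =
      ENNReal.ofReal (x ^ (α + 1) / (α + 1)) := by
  have hpre : (fun r : ℝ ↦ 1 - r) ⁻¹' Icc 0 x = Icc (1 - x) 1 := by
    simp
  rw [← hpre, (Measure.measurePreserving_sub_left volume (1 : ℝ)).setLIntegral_comp_preimage_emb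
    (MeasurableEquiv.subLeft (1 : ℝ)).measurableEmbedding (fun s ↦ ENNReal.ofReal (s ^ α)),
    ← setLIntegral_congr Ioc_ae_eq_Icc, setLIntegral_Ioc_rpow hα hx]

lemma abs_arg_le_pi_mul_norm_one_sub (z : ℂ) : |z.arg| ≤ Real.pi * ‖1 - z‖ := by
  rcases eq_or_ne z 0 with rfl | hz
  · simpa using Real.pi_pos.le
  have hz' : (‖z‖ : ℂ) ≠ 0 := by simpa using hz
  have hunit : ‖z / ‖z‖‖ = 1 := by simp [hz]
  have harg : (z / ‖z‖).arg = z.arg := by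
    rw [div_eq_mul_inv, ← Complex.ofReal_inv, Complex.arg_mul_real (by positivity)]
  have hradial : ‖z - z / ‖z‖‖ ≤ ‖1 - z‖ :=
    calc ‖z - z / ‖z‖‖ = ‖(z / ‖z‖) * ((‖z‖ - 1 : ℝ) : ℂ)‖ := by
          push_cast
          rw [mul_sub, div_mul_cancel₀ z hz', mul_one]
      _ = |‖(1 : ℂ)‖ - ‖z‖| := by
          rw [norm_mul, hunit, one_mul, Complex.norm_real, Real.norm_eq_abs, norm_one, abs_sub_comm]
      _ ≤ ‖1 - z‖ := abs_norm_sub_norm_le 1 z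
  calc |z.arg| = InnerProductGeometry.angle 1 (z / ‖z‖) := by
        rw [Complex.angle_one_left (div_ne_zero hz hz'), harg]
    _ ≤ Real.pi / 2 * ‖1 - z / ‖z‖‖ := Complex.angle_le_mul_norm_sub norm_one hunit
    _ ≤ Real.pi / 2 * (‖1 - z‖ + ‖z - z / ‖z‖‖) := by
        gcongr
        exact norm_sub_le_norm_sub_add_norm_sub _ _ _
    _ ≤ Real.pi * ‖1 - z‖ := by nlinarith [Real.pi_pos]

lemma setLIntegral_polar_rectangle_le {A B : Set ℝ} (hA : MeasurableSet A) (hB : MeasurableSet B)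
    {h : ℝ → ℝ≥0∞} (hh : Measurable h) :
    ∫⁻ z in {z : ℂ | ‖z‖ ∈ A ∧ z.arg ∈ B}, h ‖z‖ ≤
      (∫⁻ r in A, ENNReal.ofReal r * h r) * volume B := by
  have hmeas : MeasurableSet {z : ℂ | ‖z‖ ∈ A ∧ z.arg ∈ B} :=
    (measurable_norm hA).inter (Complex.measurable_arg hB)
  rw [← lintegral_indicator hmeas, ← Complex.lintegral_comp_polarCoord_symm]
  calc ∫⁻ q in polarCoord.target, ENNReal.ofReal q.1 •
          {z : ℂ | ‖z‖ ∈ A ∧ z.arg ∈ B}.indicator (fun z ↦ h ‖z‖) (Complex.polarCoord.symm q)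
      ≤ ∫⁻ q in polarCoord.target,
          A.indicator (fun r ↦ ENNReal.ofReal r * h r) q.1 * B.indicator 1 q.2 := by
        refine setLIntegral_mono' polarCoord.open_target.measurableSet fun q hq ↦ ?_
        have hnorm : ‖Complex.polarCoord.symm q‖ = q.1 := by
          rw [Complex.norm_polarCoord_symm, abs_of_pos hq.1]
        have harg : (Complex.polarCoord.symm q).arg = q.2 := by
          rw [Complex.polarCoord_symm_apply, Complex.ofReal_cos, Complex.ofReal_sin,
            Complex.arg_mul_cos_add_sin_mul_I hq.1 ⟨hq.2.1, hq.2.2.le⟩]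
        generalize Complex.polarCoord.symm q = z at hnorm harg ⊢
        by_cases hqA : q.1 ∈ A <;> by_cases hqB : q.2 ∈ B <;>
          simp [indicator, hnorm, harg, hqA, hqB]
    _ ≤ ∫⁻ q : ℝ × ℝ, A.indicator (fun r ↦ ENNReal.ofReal r * h r) q.1 * B.indicator 1 q.2 :=
        setLIntegral_le_lintegral _ _
    _ = (∫⁻ r in A, ENNReal.ofReal r * h r) * volume B := by
        rw [Measure.volume_eq_prod, lintegral_prod_mul (by fun_prop (disch := assumption))
          (by fun_prop (disch := assumption)), lintegral_indicator hA, lintegral_indicator_one hB]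

lemma ofReal_mul_one_sub_sq_rpow_le (α : ℝ) {r : ℝ} (hr : r ≤ 1) :
    ENNReal.ofReal r * ENNReal.ofReal ((1 - r ^ 2) ^ α) ≤
      ENNReal.ofReal (2 ^ |α|) * ENNReal.ofReal ((1 - r) ^ α) := by
  rcases le_total r 0 with hr0 | hr0
  · simp [ENNReal.ofReal_of_nonpos hr0]
  rw [← ENNReal.ofReal_mul hr0, ← ENNReal.ofReal_mul (by positivity)]
  refine ENNReal.ofReal_le_ofReal ?_
  have hpow : (1 + r) ^ α ≤ 2 ^ |α| :=
    calc (1 + r) ^ α ≤ (1 + r) ^ |α| :=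
          Real.rpow_le_rpow_of_exponent_le (by linarith) (le_abs_self α)
      _ ≤ 2 ^ |α| := Real.rpow_le_rpow (by linarith) (by linarith) (abs_nonneg α)
  calc r * (1 - r ^ 2) ^ α = r * ((1 + r) ^ α * (1 - r) ^ α) := by
        rw [← Real.mul_rpow (by linarith) (by linarith)]
        ring_nf
    _ ≤ 1 * (2 ^ |α| * (1 - r) ^ α) := by
        gcongr
    _ = 2 ^ |α| * (1 - r) ^ α := one_mul _

lemma setLIntegral_closedBall_one_weight_le {x : ℝ} (hα : -1 < α) (hx : 0 < x) :
    ∫⁻ z in ball (0 : ℂ) 1 ∩ closedBall 1 x, ENNReal.ofReal ((1 - ‖z‖ ^ 2) ^ α) ∂dA ≤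
      ENNReal.ofReal (2 ^ (|α| + 1) / (α + 1) * x ^ (α + 2)) := by
  have hα1 : 0 < α + 1 := by linarith
  have hsub : ball (0 : ℂ) 1 ∩ closedBall 1 x ⊆
      {z | ‖z‖ ∈ Icc (1 - x) 1 ∧ z.arg ∈ Icc (-(Real.pi * x)) (Real.pi * x)} := by
    rintro z ⟨hz, hzx⟩
    rw [mem_ball_zero_iff] at hz
    rw [mem_closedBall_iff_norm'] at hzx
    have hnorm : 1 - ‖z‖ ≤ ‖1 - z‖ := by simpa using norm_sub_norm_le 1 z
    exact ⟨⟨by linarith, hz.le⟩, abs_le.1 <| (abs_arg_le_pi_mul_norm_one_sub z).trans <| by gcongr⟩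
  have hradial : ∫⁻ r in Icc (1 - x) 1, ENNReal.ofReal r * ENNReal.ofReal ((1 - r ^ 2) ^ α) ≤
      ENNReal.ofReal (2 ^ |α|) * ENNReal.ofReal (x ^ (α + 1) / (α + 1)) := by
    rw [← setLIntegral_Icc_one_sub_rpow hα hx.le, ← lintegral_const_mul' _ _ ENNReal.ofReal_ne_top]
    exact setLIntegral_mono' measurableSet_Icc fun r hr ↦ ofReal_mul_one_sub_sq_rpow_le α hr.2
  rw [dA, Measure.restrict_smul, lintegral_smul_measure, smul_eq_mul,
    ← ENNReal.ofReal_inv_of_pos Real.pi_pos]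
  calc ENNReal.ofReal Real.pi⁻¹ *
        ∫⁻ z in ball (0 : ℂ) 1 ∩ closedBall 1 x, ENNReal.ofReal ((1 - ‖z‖ ^ 2) ^ α)
      ≤ ENNReal.ofReal Real.pi⁻¹ *
          ((∫⁻ r in Icc (1 - x) 1, ENNReal.ofReal r * ENNReal.ofReal ((1 - r ^ 2) ^ α)) *
            volume (Icc (-(Real.pi * x)) (Real.pi * x))) := by
        gcongr
        exact (lintegral_mono_set hsub).trans <| setLIntegral_polar_rectangle_le measurableSet_Icc
          measurableSet_Icc (h := fun r ↦ ENNReal.ofReal ((1 - r ^ 2) ^ α)) (by fun_prop)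
    _ ≤ ENNReal.ofReal Real.pi⁻¹ *
          (ENNReal.ofReal (2 ^ |α|) * ENNReal.ofReal (x ^ (α + 1) / (α + 1)) *
            ENNReal.ofReal (Real.pi * x - -(Real.pi * x))) := by
        rw [Real.volume_Icc]
        gcongr
    _ = ENNReal.ofReal (2 ^ (|α| + 1) / (α + 1) * x ^ (α + 2)) := by
        have hxpow : x ^ (α + 2) = x ^ (α + 1) * x := by
          rw [← Real.rpow_add_one hx.ne']
          ring_nf
        rw [← ENNReal.ofReal_mul (by positivity), ← ENNReal.ofReal_mul (by positivity),
          ← ENNReal.ofReal_mul (by positivity), hxpow, Real.rpow_add_one two_ne_zero]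
        congr 1
        field_simp
        ring

end CarlesonBoxes

section BergmanNorm

variable {p α : ℝ} {f : ℂ → ℂ}

lemma bergmanNorm_lt_top (hp : 0 ≤ p)
    (h : ∫⁻ z in ball (0 : ℂ) 1, ENNReal.ofReal ((1 - ‖z‖ ^ 2) ^ α * ‖f z‖ ^ p) ∂dA < ⊤) :
    bergmanNorm p α f < ⊤ :=
  ENNReal.rpow_lt_top_of_nonneg (one_div_nonneg.2 hp)
    (ENNReal.mul_lt_top ENNReal.ofReal_lt_top h).ne

lemma setLIntegral_bergman_le_of_norm_le {M : ℝ} {S : Set ℂ} (hp : 0 ≤ p) (hS : MeasurableSet S)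
    (hS1 : S ⊆ ball 0 1) (hM : ∀ z ∈ S, ‖f z‖ ≤ M) :
    ∫⁻ z in S, ENNReal.ofReal ((1 - ‖z‖ ^ 2) ^ α * ‖f z‖ ^ p) ∂dA ≤
      ENNReal.ofReal (M ^ p) * ∫⁻ z in S, ENNReal.ofReal ((1 - ‖z‖ ^ 2) ^ α) ∂dA := by
  rw [← lintegral_const_mul' _ _ ENNReal.ofReal_ne_top]
  refine setLIntegral_mono' hS fun z hz ↦ ?_
  have hz1 : ‖z‖ < 1 := mem_ball_zero_iff.1 (hS1 hz)
  have hweight : 0 ≤ (1 - ‖z‖ ^ 2) ^ α :=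
    Real.rpow_nonneg (sub_nonneg.2 (pow_le_one₀ (norm_nonneg z) hz1.le)) α
  rw [mul_comm, ENNReal.ofReal_mul' hweight]
  gcongr
  exact hM z hz

lemma ball_subset_iUnion_shells {q : ℝ} (hq0 : 0 < q) (hq1 : q < 1) :
    ball (0 : ℂ) 1 ⊆
      ⋃ k : ℕ, ball 0 1 ∩ {z | q ^ (k + 1) ≤ ‖1 - z‖} ∩ closedBall 1 (2 * q ^ k) := by
  intro z hz
  have hz1 : ‖z‖ < 1 := mem_ball_zero_iff.1 hz
  have hpos : 0 < ‖1 - z‖ := norm_pos_iff.2 (sub_ne_zero.2 (by rintro rfl; simp at hz1))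
  have hle : ‖1 - z‖ ≤ 2 := (norm_sub_le 1 z).trans (by rw [norm_one]; linarith)
  obtain ⟨k, hk, hk'⟩ :=
    exists_nat_pow_near_of_lt_one (half_pos hpos) ((div_le_one two_pos).2 hle) hq0 hq1
  refine mem_iUnion.2 ⟨k, ⟨hz, ?_⟩, mem_closedBall_iff_norm'.2 ?_⟩
  · exact hk.le.trans (half_le_self hpos.le)
  · linarith

lemma bergmanNorm_lt_top_of_norm_le_on_shells {q : ℝ} {M : ℕ → ℝ} (hp : 0 ≤ p) (hα : -1 < α)
    (hq0 : 0 < q) (hq1 : q < 1)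
    (hM : ∀ (k : ℕ) (z : ℂ), ‖z‖ < 1 → q ^ (k + 1) ≤ ‖1 - z‖ → ‖f z‖ ≤ M k)
    (hsum : Summable fun k ↦ M k ^ p * (q ^ k) ^ (α + 2)) :
    bergmanNorm p α f < ⊤ := by
  set w : ℂ → ℝ≥0∞ := fun z ↦ ENNReal.ofReal ((1 - ‖z‖ ^ 2) ^ α * ‖f z‖ ^ p)
  set D : ℕ → Set ℂ := fun k ↦ ball 0 1 ∩ {z | q ^ (k + 1) ≤ ‖1 - z‖}
  set C : ℝ := 2 ^ (|α| + 1) / (α + 1) * 2 ^ (α + 2)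
  have hshell (k : ℕ) : ∫⁻ z in D k ∩ closedBall 1 (2 * q ^ k), w z ∂dA ≤
      ENNReal.ofReal (C * (M k ^ p * (q ^ k) ^ (α + 2))) := by
    have hmeas : MeasurableSet (D k ∩ closedBall 1 (2 * q ^ k)) :=
      (measurableSet_ball.inter (measurableSet_le (by fun_prop) (by fun_prop))).inter
        measurableSet_closedBall
    calc ∫⁻ z in D k ∩ closedBall 1 (2 * q ^ k), w z ∂dA
        ≤ ENNReal.ofReal (M k ^ p) *
            ∫⁻ z in D k ∩ closedBall 1 (2 * q ^ k), ENNReal.ofReal ((1 - ‖z‖ ^ 2) ^ α) ∂dA :=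
          setLIntegral_bergman_le_of_norm_le hp hmeas (fun z hz ↦ hz.1.1)
            fun z hz ↦ hM k z (mem_ball_zero_iff.1 hz.1.1) hz.1.2
      _ ≤ ENNReal.ofReal (M k ^ p) *
            ENNReal.ofReal (2 ^ (|α| + 1) / (α + 1) * (2 * q ^ k) ^ (α + 2)) := by
          gcongr
          exact (lintegral_mono_set (inter_subset_inter_left _ inter_subset_left)).trans
            (setLIntegral_closedBall_one_weight_le hα (by positivity))
      _ = ENNReal.ofReal (C * (M k ^ p * (q ^ k) ^ (α + 2))) := by
          have hα1 : 0 < α + 1 := by linarith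
          rw [← ENNReal.ofReal_mul' (by positivity), Real.mul_rpow two_pos.le (by positivity)]
          congr 1
          ring
  refine bergmanNorm_lt_top hp ?_
  calc ∫⁻ z in ball (0 : ℂ) 1, w z ∂dA
      ≤ ∑' k, ∫⁻ z in D k ∩ closedBall 1 (2 * q ^ k), w z ∂dA :=
        (lintegral_mono_set (ball_subset_iUnion_shells hq0 hq1)).trans (lintegral_iUnion_le _ _)
    _ ≤ ∑' k, ENNReal.ofReal (C * (M k ^ p * (q ^ k) ^ (α + 2))) := ENNReal.tsum_le_tsum hshell
    _ < ⊤ := (hsum.mul_left C).tsum_ofReal_lt_top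

end BergmanNorm

section FunctionDJV

/-- The coefficient `1 / log (n + 2)` of `z ^ (n + 1)` in `fDJV`; the shift of the index makes the
sequence antitone on all of `ℕ`. -/
noncomputable def coeffDJV (n : ℕ) : ℝ := (Real.log (n + 2))⁻¹

lemma half_le_log_add_two (n : ℕ) : 1 / 2 ≤ Real.log (n + 2) :=
  calc (1 / 2 : ℝ) ≤ Real.log 2 := by linarith [Real.log_two_gt_d9]
    _ ≤ Real.log (n + 2) := Real.log_le_log two_pos (by simp)

lemma coeffDJV_nonneg (n : ℕ) : 0 ≤ coeffDJV n :=
  inv_nonneg.2 <| one_half_pos.le.trans (half_le_log_add_two n)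

lemma coeffDJV_le_two (n : ℕ) : coeffDJV n ≤ 2 := by
  simpa [coeffDJV] using inv_anti₀ one_half_pos (half_le_log_add_two n)

lemma coeffDJV_antitone : Antitone coeffDJV := fun m n hmn ↦
  inv_anti₀ (one_half_pos.trans_le (half_le_log_add_two m)) <|
    Real.log_le_log (by positivity) (by gcongr)

lemma norm_coeffDJV_le (n : ℕ) : ‖(coeffDJV n : ℂ)‖ ≤ coeffDJV 0 :=
  norm_ofReal_le_of_antitone coeffDJV_antitone coeffDJV_nonneg n

lemma coeffDJV_two_pow_le (k : ℕ) : coeffDJV (2 ^ k) ≤ 4 / (k + 1) := by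
  have hlog : (k : ℝ) * Real.log 2 ≤ Real.log ((2 ^ k : ℕ) + 2) := by
    rw [← Real.log_pow]
    exact Real.log_le_log (by positivity) (by simp)
  have hhalf := half_le_log_add_two (2 ^ k)
  have hlog2 := Real.log_two_gt_d9
  rw [coeffDJV, ← inv_div]
  exact inv_anti₀ (by positivity) (by nlinarith [k.cast_nonneg (α := ℝ)])

lemma fDJV_eq_mul_tsum (z : ℂ) : fDJV z = z * ∑' n, (coeffDJV n : ℂ) * z ^ n := by
  rw [fDJV, ← tsum_mul_left]
  refine tsum_congr fun n ↦ ?_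
  rw [coeffDJV, Complex.ofReal_inv]
  ring

lemma differentiableOn_fDJV : DifferentiableOn ℂ fDJV (ball 0 1) :=
  (differentiableOn_id.mul (differentiableOn_tsum_mul_pow norm_coeffDJV_le)).congr
    fun z _ ↦ fDJV_eq_mul_tsum z

-- Cutting the series at `N = 2 ^ k`, about `‖1 - z‖ ^ (-1/2)`, keeps the head, of order `2 ^ k`,
-- below `4 ^ k / (k + 1)`, while `log N` is still comparable to `log ‖1 - z‖⁻¹`.
lemma norm_fDJV_le {z : ℂ} (hz : ‖z‖ < 1) {k : ℕ} (hk : (4⁻¹ : ℝ) ^ k ≤ ‖1 - z‖) :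
    ‖fDJV z‖ ≤ 10 * 4 ^ k / (k + 1) := by
  have hinv : ‖1 - z‖⁻¹ ≤ 4 ^ k := by
    simpa using inv_anti₀ (by positivity) hk
  have hhead : (2 : ℝ) ^ k ≤ 4 ^ k / (k + 1) := by
    have hk2 : (k + 1 : ℝ) ≤ 2 ^ k := mod_cast Nat.lt_two_pow_self
    rw [le_div_iff₀ (by positivity), show (4 : ℝ) = 2 * 2 by norm_num, mul_pow]
    gcongr
  calc ‖fDJV z‖ ≤ ‖∑' n, (coeffDJV n : ℂ) * z ^ n‖ := by
        rw [fDJV_eq_mul_tsum, norm_mul]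
        exact mul_le_of_le_one_left (norm_nonneg _) hz.le
    _ ≤ ∑ n ∈ Finset.range (2 ^ k), coeffDJV n + 2 * coeffDJV (2 ^ k) / ‖1 - z‖ :=
        norm_tsum_mul_pow_le coeffDJV_antitone coeffDJV_nonneg hz _
    _ ≤ ∑ n ∈ Finset.range (2 ^ k), 2 + 2 * (4 / (k + 1)) * 4 ^ k := by
        rw [div_eq_mul_inv]
        gcongr
        exacts [coeffDJV_le_two _, coeffDJV_two_pow_le k]
    _ = 2 * 2 ^ k + 8 * (4 ^ k / (k + 1)) := by
        rw [Finset.sum_const, Finset.card_range, nsmul_eq_mul]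
        push_cast
        ring
    _ ≤ 2 * (4 ^ k / (k + 1)) + 8 * (4 ^ k / (k + 1)) := by gcongr
    _ = 10 * 4 ^ k / (k + 1) := by ring

lemma bergmanNorm_fDJV_lt_top {p : ℝ} (hp : 1 < p) : bergmanNorm p (p - 2) fDJV < ⊤ := by
  have hterm (k : ℕ) : 40 ^ p * ((k + 2 : ℕ) : ℝ) ^ (-p) =
      (10 * 4 ^ (k + 1) / ((k + 1 : ℕ) + 1)) ^ p * ((4⁻¹ : ℝ) ^ k) ^ (p - 2 + 2) := by
    rw [sub_add_cancel, ← Real.mul_rpow (by positivity) (by positivity),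
      Real.rpow_neg (by positivity), ← Real.inv_rpow (by positivity),
      ← Real.mul_rpow (by positivity) (by positivity)]
    congr 1
    push_cast
    rw [inv_pow]
    field_simp
    ring
  refine bergmanNorm_lt_top_of_norm_le_on_shells (q := 4⁻¹) (by linarith) (by linarith)
    (by norm_num) (by norm_num) (fun k z hz hk ↦ norm_fDJV_le hz hk) (Summable.congr ?_ hterm)
  exact ((summable_nat_add_iff 2).2 (Real.summable_nat_rpow.2 (by linarith))).mul_left _

lemma not_summable_one_div_nat_mul_log :
    ¬ Summable fun n : ℕ ↦ 1 / ((n : ℝ) * Real.log n) := by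
  have hnonneg : ∀ n : ℕ, 0 ≤ 1 / ((n : ℝ) * Real.log n) := fun n ↦
    one_div_nonneg.2 (mul_nonneg n.cast_nonneg (Real.log_natCast_nonneg n))
  have hanti : ∀ᶠ n : ℕ in atTop,
      1 / (((n + 1 : ℕ) : ℝ) * Real.log (n + 1 : ℕ)) ≤ 1 / ((n : ℝ) * Real.log n) := by
    filter_upwards [eventually_ge_atTop 2] with n hn
    have hlog : 0 < Real.log n := Real.log_pos (by exact_mod_cast hn)
    gcongr <;> simp
  have hcondensed (k : ℕ) : (2 : ℝ) ^ k * (1 / (((2 ^ k : ℕ) : ℝ) * Real.log (2 ^ k : ℕ))) =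
      (Real.log 2)⁻¹ * (1 / k) := by
    push_cast
    rw [Real.log_pow]
    field_simp
  rw [← summable_condensed_iff_of_eventually_nonneg (.of_forall hnonneg) hanti,
    summable_congr hcondensed, summable_mul_left_iff (by positivity)]
  exact Real.not_summable_one_div_natCast

lemma not_summable_one_div_add_two_mul_log :
    ¬ Summable fun n : ℕ ↦ 1 / (((n : ℝ) + 2) * Real.log ((n : ℝ) + 2)) := by
  have h := (summable_nat_add_iff 2).not.2 not_summable_one_div_nat_mul_log
  simpa using h

lemma ofReal_norm_tsum_ofReal {ι : Type*} {u : ι → ℝ} (hu0 : ∀ i, 0 ≤ u i) (hu : Summable u) :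
    ENNReal.ofReal ‖∑' i, (u i : ℂ)‖ = ∑' i, ENNReal.ofReal (u i) := by
  rw [← Complex.ofReal_tsum, Complex.norm_real, Real.norm_of_nonneg (tsum_nonneg hu0),
    ENNReal.ofReal_tsum_of_nonneg hu0 hu]

lemma ofReal_norm_fDJV {t : ℝ} (ht : t ∈ Ioo 0 1) :
    ENNReal.ofReal ‖fDJV t‖ = ∑' n, ENNReal.ofReal (coeffDJV n * t ^ (n + 1)) := by
  have hz : ‖(t : ℂ)‖ < 1 := by simpa [abs_of_pos ht.1] using ht.2
  have hterm (n : ℕ) : (t : ℂ) * (coeffDJV n * t ^ n) = (coeffDJV n * t ^ (n + 1) : ℝ) := by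
    push_cast
    ring
  rw [fDJV_eq_mul_tsum, ← tsum_mul_left, tsum_congr hterm, ofReal_norm_tsum_ofReal]
  · exact fun n ↦ mul_nonneg (coeffDJV_nonneg n) (pow_nonneg ht.1.le _)
  · exact Complex.summable_ofReal.1
      (((summable_mul_pow_of_norm_le norm_coeffDJV_le hz).mul_left (t : ℂ)).congr hterm)

lemma setLIntegral_Ioo_mul_pow {c : ℝ} (hc : 0 ≤ c) (n : ℕ) :
    ∫⁻ t in Ioo (0 : ℝ) 1, ENNReal.ofReal (c * t ^ n) = ENNReal.ofReal (c / (n + 1)) := by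
  have hpow := setLIntegral_Ioc_rpow (α := n) (by linarith [n.cast_nonneg (α := ℝ)]) zero_le_one
  simp only [Real.rpow_natCast, Real.one_rpow] at hpow
  simp only [ENNReal.ofReal_mul hc]
  rw [lintegral_const_mul' _ _ ENNReal.ofReal_ne_top, setLIntegral_congr Ioo_ae_eq_Ioc, hpow,
    ← ENNReal.ofReal_mul hc, mul_one_div]

lemma lintegral_fDJV_eq_top : ∫⁻ t in Ioo (0 : ℝ) 1, ENNReal.ofReal ‖fDJV (t : ℂ)‖ = ⊤ := by
  have hterm (n : ℕ) : ∫⁻ t in Ioo (0 : ℝ) 1, ENNReal.ofReal (coeffDJV n * t ^ (n + 1)) =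
      ENNReal.ofReal (1 / (((n : ℝ) + 2) * Real.log ((n : ℝ) + 2))) := by
    rw [setLIntegral_Ioo_mul_pow (coeffDJV_nonneg n), coeffDJV]
    congr 1
    push_cast
    rw [add_assoc, one_add_one_eq_two, one_div, mul_inv_rev, div_eq_mul_inv]
  rw [setLIntegral_congr_fun measurableSet_Ioo fun t ht ↦ ofReal_norm_fDJV ht,
    lintegral_tsum fun n ↦ by fun_prop, tsum_congr hterm]
  by_contra hfinite
  refine not_summable_one_div_add_two_mul_log ((ENNReal.summable_toReal hfinite).congr fun n ↦ ?_)
  exact ENNReal.toReal_ofReal (one_div_nonneg.2 (mul_nonneg (by positivity)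
    (one_half_pos.le.trans (half_le_log_add_two n))))

end FunctionDJV

/-- The function `f(z) = ∑_{n≥1} z^n / log(n+1)` belongs to `A^p_{p-2}`
for every `p > 1`, while `∫_0^1 f(t) dt = +∞` (equivalently
`∑_{n≥1} 1/((n+1) log(n+1)) = ∞`); hence the Hilbert operator `ℋ` and the operator `ℐ`
are not well defined on `A^p_{p-2}` for any `p > 1`. -/
theorem fDJV_in_Apa_but_integral_infinite :
    (∀ p : ℝ, 1 < p →
      DifferentiableOn ℂ fDJV (ball (0 : ℂ) 1) ∧ bergmanNorm p (p - 2) fDJV < ⊤) ∧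
    (∫⁻ t in Ioo (0 : ℝ) 1, ENNReal.ofReal ‖fDJV (t : ℂ)‖) = ⊤ ∧
    ¬ Summable (fun n : ℕ => 1 / (((n : ℝ) + 2) * Real.log ((n : ℝ) + 2))) := by
  exact ⟨fun _ hp ↦ ⟨differentiableOn_fDJV, bergmanNorm_fDJV_lt_top hp⟩,
    lintegral_fDJV_eq_top, not_summable_one_div_add_two_mul_log⟩
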